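/- Let Λ be a finite-dimensional algebra over a field with global dimension at most d, where d ≥ 1. If X is a bounded complex of Λ-modules such that H^i(X) = 0 for every integer i not divisible by d, then X is isomorphic, in the derived category of Λ-modules, to the direct sum ⊕_{i∈ℤ} H^{di}(X)[−di] of its cohomology modules, each placed in its own degree with zero differentials. -/

import Mathlib

/-!
Statement 9.  Let `Λ` be a finite-dimensional algebra over a field with global dimension at
most `d ≥ 1`.  If `X` is a bounded complex of `Λ`-modules with `H^i(X) = 0` for every `i` not
divisible by `d`, then `X` is isomorphic in the derived category to the complex
`⊕_{i ∈ ℤ} H^{di}(X)[-di]` (its cohomology modules, each placed in its own degree, with zero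
differentials).
-/

universe w v u

open CategoryTheory Limits

section ProjDim

/-- `pdLE R n M` means `M` admits a projective resolution of length at most `n`. -/
def pdLE (R : Type v) [Ring R] : ℕ → ∀ (M : Type v) [AddCommGroup M] [Module R M], Prop
  | 0, M, _, _ => Module.Projective R M
  | n+1, M, _, _ => ∃ (P : Type v) (_ : AddCommGroup P) (_ : Module R P)
      (f : P →ₗ[R] M), Module.Projective R P ∧ Function.Surjective f ∧
      pdLE R n ↥(LinearMap.ker f)

/-- The projective dimension of a module, as an element of `ℕ∞`. -/
noncomputable def projDim (R : Type v) [Ring R] (M : Type v) [AddCommGroup M]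
    [Module R M] : ℕ∞ :=
  ⨅ (n : ℕ) (_ : pdLE R n M), (n : ℕ∞)

/-- The global dimension of a ring: the supremum of the projective dimensions of all
left modules. -/
noncomputable def globalDim (R : Type v) [Ring R] : ℕ∞ :=
  ⨆ (M : ModuleCat.{v} R), projDim R M

end ProjDim

section CohomologyComplex

variable (Λ : Type v) [Ring Λ] (d : ℕ) (X : CochainComplex (ModuleCat.{v} Λ) ℤ)

/-- The complex `⊕_{i∈ℤ} H^{di}(X)[-di]`: it has the cohomology `H^i(X)` in each degree `i`
divisible by `d` and `0` in all other degrees, with zero differentials. -/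
noncomputable def formalComplex : CochainComplex (ModuleCat.{v} Λ) ℤ where
  X i := if (d : ℤ) ∣ i then X.homology i else ModuleCat.of Λ PUnit
  d _ _ := 0
  shape _ _ _ := rfl
  d_comp_d' := by intros; simp

end CohomologyComplex

/-!
Let `i` be a degree with `H^i(X) ≠ 0`. The cohomology of `X` vanishes in degrees strictly between
`i - d` and `i`, so `τ<i X` lives in degrees `≤ i - d` and `Hom(H^i(X)[-i], (τ<i X)[1]) = 0` because
`H^i(X)` has projective dimension at most `d`. This is the obstruction to lifting
`H^i(X)[-i] ≅ τ≥i τ≤i X` to `τ≤i X`, hence there is a morphism `H^i(X)[-i] ⟶ X` inducing an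
isomorphism on `H^i`. Cohomology commutes with countable coproducts, so the sum of these morphisms
over all `i` is an isomorphism.
-/

section Vanishing

open HomologicalComplex Pretriangulated DerivedCategory

variable {C : Type u} [Category.{v} C] [Abelian C]

lemma isKProjective_single (P : C) [Projective P] (i : ℤ) :
    CochainComplex.IsKProjective ((single C (.up ℤ) i).obj P) := by
  have (n : ℤ) : Projective (((single C (.up ℤ) i).obj P).X n) := by
    obtain rfl | h := eq_or_ne n i
    · exact .of_iso (singleObjXSelf (.up ℤ) n P).symm inferInstance
    · exact (isZero_single_obj_X _ _ _ _ h).projective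
  exact CochainComplex.isKProjective_of_projective _ i

variable [HasDerivedCategory.{w} C]

lemma Q_map_surjective_of_isKProjective (K L : CochainComplex C ℤ) [K.IsKProjective] :
    Function.Surjective (Q.map : (K ⟶ L) → (Q.obj K ⟶ Q.obj L)) := by
  intro f
  obtain ⟨g, hg⟩ := (CochainComplex.IsKProjective.Qh_map_bijective K
    ((HomotopyCategory.quotient _ _).obj L)).surjective
    ((quotientCompQhIso C).hom.app K ≫ f ≫ (quotientCompQhIso C).inv.app L)
  obtain ⟨φ, rfl⟩ := (HomotopyCategory.quotient _ _).map_surjective g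
  have hφ := (quotientCompQhIso C).inv.naturality φ
  refine ⟨φ, ?_⟩
  rw [← cancel_mono ((quotientCompQhIso C).inv.app L)]
  refine hφ.trans ?_
  rw [Functor.comp_map, hg]
  exact Iso.inv_hom_id_app_assoc _ _ _

lemma singleFunctor_hom_eq_zero_of_projective {P : C} [Projective P] {K : DerivedCategory C}
    {i m : ℤ} [K.IsLE m] (hm : m < i) (f : (singleFunctor C i).obj P ⟶ K) : f = 0 := by
  obtain ⟨L, _, ⟨e⟩⟩ := K.exists_iso_Q_obj_of_isLE m
  have := isKProjective_single P i
  obtain ⟨φ, hφ⟩ := Q_map_surjective_of_isKProjective ((single C (.up ℤ) i).obj P) L (f ≫ e.hom)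
  have hφ₀ : φ = 0 := from_single_hom_ext ((L.isZero_of_isStrictlyLE m i hm).eq_of_tgt _ _)
  rw [← cancel_mono e.hom, zero_comp]
  exact hφ.symm.trans ((congrArg _ hφ₀).trans (Q.map_zero _ _))

lemma exists_distinguished_singleFunctor_of_shortExact {S : ShortComplex C} (hS : S.ShortExact)
    (i : ℤ) : ∃ δ : (singleFunctor C i).obj S.X₃ ⟶ ((singleFunctor C i).obj S.X₁)⟦(1 : ℤ)⟧,
      Triangle.mk ((singleFunctor C i).map S.f) ((singleFunctor C i).map S.g) δ ∈ distTriang _ :=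
  ⟨_, triangleOfSES_distinguished (hS.map_of_exact (single C (.up ℤ) i))⟩

lemma singleFunctor_hom_eq_zero_of_shortExact {S : ShortComplex C} (hS : S.ShortExact)
    {K : DerivedCategory C} {i j : ℤ} (hj : j + 1 = i)
    (h₁ : ∀ f : (singleFunctor C j).obj S.X₁ ⟶ K, f = 0)
    (h₂ : ∀ f : (singleFunctor C i).obj S.X₂ ⟶ K, f = 0)
    (f : (singleFunctor C i).obj S.X₃ ⟶ K) : f = 0 := by
  obtain ⟨δ, hδ⟩ := exists_distinguished_singleFunctor_of_shortExact hS i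
  obtain ⟨g, hg⟩ : ∃ g : ((singleFunctor C i).obj S.X₁)⟦(1 : ℤ)⟧ ⟶ K, f = δ ≫ g :=
    Triangle.yoneda_exact₃ _ hδ f (h₂ _)
  let e : ((singleFunctor C i).obj S.X₁)⟦(1 : ℤ)⟧ ≅ (singleFunctor C j).obj S.X₁ :=
    ((singleFunctors C).shiftIso 1 j i (by omega)).app S.X₁
  have hg₀ : g = 0 := (Preadditive.IsIso.comp_left_eq_zero e.inv g).1 (h₁ _)
  rw [hg, hg₀, comp_zero]

lemma singleFunctor_hom_eq_zero_of_hasProjectiveDimensionLE [EnoughProjectives C] {M : C} {n : ℕ}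
    [HasProjectiveDimensionLE M n] {K : DerivedCategory C} {i m : ℤ} [K.IsLE m] (hm : m + n < i)
    (f : (singleFunctor C i).obj M ⟶ K) : f = 0 := by
  induction n generalizing M i with
  | zero =>
    have : Projective M := (projective_iff_hasProjectiveDimensionLE_zero M).2 ‹_›
    exact singleFunctor_hom_eq_zero_of_projective (by simpa using hm) f
  | succ n ih =>
    have hS : (ShortComplex.mk _ _ (kernel.condition (Projective.π M))).ShortExact :=
      { exact := ShortComplex.exact_kernel _ }
    have : HasProjectiveDimensionLE (kernel (Projective.π M)) n :=
      (hS.hasProjectiveDimensionLT_X₃_iff n (Projective.projective_over M)).1 ‹_›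
    push_cast at hm
    have h₂ (g : (singleFunctor C i).obj (Projective.over M) ⟶ K) : g = 0 :=
      singleFunctor_hom_eq_zero_of_projective (m := m) (by omega) g
    exact singleFunctor_hom_eq_zero_of_shortExact hS (sub_add_cancel i 1)
      (fun g ↦ ih (by omega) g) h₂ f

end Vanishing

section Lifting

open Pretriangulated DerivedCategory

variable {C : Type u} [Category.{v} C] [Abelian C] [HasDerivedCategory.{w} C]

lemma isIso_homologyFunctor_map_mor₁ {T : Triangle (DerivedCategory C)} (hT : T ∈ distTriang _)
    {i j : ℤ} (hij : i + 1 = j) (hi : IsZero ((homologyFunctor C i).obj T.obj₃))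
    (hj : IsZero ((homologyFunctor C j).obj T.obj₃)) :
    IsIso ((homologyFunctor C j).map T.mor₁) := by
  have := (HomologySequence.mono_homologyMap_mor₁_iff T hT i j hij).2 (hi.eq_of_src _ _)
  have := (HomologySequence.epi_homologyMap_mor₁_iff T hT j).2 (hj.eq_of_tgt _ _)
  exact isIso_of_mono_of_epi _

lemma isIso_homologyFunctor_map_mor₂ {T : Triangle (DerivedCategory C)} (hT : T ∈ distTriang _)
    {i j : ℤ} (hij : i + 1 = j) (hi : IsZero ((homologyFunctor C i).obj T.obj₁))
    (hj : IsZero ((homologyFunctor C j).obj T.obj₁)) :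
    IsIso ((homologyFunctor C i).map T.mor₂) := by
  have := (HomologySequence.mono_homologyMap_mor₂_iff T hT i).2 (hi.eq_of_src _ _)
  have := (HomologySequence.epi_homologyMap_mor₂_iff T hT i j hij).2 (hj.eq_of_tgt _ _)
  exact isIso_of_mono_of_epi _

lemma isIso_homologyFunctor_map_truncLTι (K : DerivedCategory C) {i n : ℤ} (hi : i < n) :
    IsIso ((homologyFunctor C i).map ((TStructure.t.truncLTι n).app K)) :=
  isIso_homologyFunctor_map_mor₁ (TStructure.t.triangleLTGE_distinguished n K)
    (sub_add_cancel i 1) (isZero_of_isGE _ n _ (by omega)) (isZero_of_isGE _ n _ hi)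

lemma isIso_homologyFunctor_map_truncGEπ (K : DerivedCategory C) {i n : ℤ} (hi : n ≤ i) :
    IsIso ((homologyFunctor C i).map ((TStructure.t.truncGEπ n).app K)) :=
  isIso_homologyFunctor_map_mor₂ (TStructure.t.triangleLTGE_distinguished n K)
    rfl (isZero_of_isLE _ (n - 1) _ (by omega)) (isZero_of_isLE _ (n - 1) _ (by omega))

lemma nonempty_truncGE_iso_singleFunctor (K : DerivedCategory C) (i : ℤ) [K.IsLE i] :
    Nonempty ((TStructure.t.truncGE i).obj K ≅
      (singleFunctor C i).obj ((homologyFunctor C i).obj K)) := by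
  have : ((TStructure.t.truncGE i).obj K).IsLE i := (isLE_iff _ i).2 fun j hj ↦ by
    have := isIso_homologyFunctor_map_truncGEπ K hj.le
    exact (isZero_of_isLE K i j hj).of_iso
      (asIso ((homologyFunctor C j).map ((TStructure.t.truncGEπ i).app K))).symm
  obtain ⟨M, ⟨e⟩⟩ := exists_iso_singleFunctor_obj_of_isGE_of_isLE
    ((TStructure.t.truncGE i).obj K) i
  have := isIso_homologyFunctor_map_truncGEπ K le_rfl (i := i)
  exact ⟨e ≪≫ (singleFunctor C i).mapIso
    (((singleFunctorCompHomologyFunctorIso C i).app M).symm ≪≫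
    (homologyFunctor C i).mapIso e.symm ≪≫
    (asIso ((homologyFunctor C i).map ((TStructure.t.truncGEπ i).app K))).symm)⟩

lemma isLE_truncLT_obj_of_isZero (K : DerivedCategory C) {i m : ℤ}
    (hK : ∀ j, m < j → j < i → IsZero ((homologyFunctor C j).obj K)) :
    ((TStructure.t.truncLT i).obj K).IsLE m := by
  refine (isLE_iff _ m).2 fun j hj ↦ ?_
  obtain hji | hij := lt_or_ge j i
  · have := isIso_homologyFunctor_map_truncLTι K hji
    exact (hK j hj hji).of_iso
      (asIso ((homologyFunctor C j).map ((TStructure.t.truncLTι i).app K)))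
  · exact isZero_of_isLE _ (i - 1) j (by omega)

variable [EnoughProjectives C]

lemma exists_section_truncGEπ (K : DerivedCategory C) (i : ℤ) {d : ℕ} [K.IsLE i]
    [HasProjectiveDimensionLE ((homologyFunctor C i).obj K) d]
    (hK : ∀ j, i - d < j → j < i → IsZero ((homologyFunctor C j).obj K)) :
    ∃ s : (TStructure.t.truncGE i).obj K ⟶ K, s ≫ (TStructure.t.truncGEπ i).app K = 𝟙 _ := by
  obtain ⟨e⟩ := nonempty_truncGE_iso_singleFunctor K i
  have := isLE_truncLT_obj_of_isZero K hK
  have := TStructure.t.isLE_shift ((TStructure.t.truncLT i).obj K) (i - d) 1 (i - d - 1)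
  -- `τ<i K⟦1⟧` lives in degrees `≤ i - d - 1`, out of reach of `Ext` groups of degree `≤ d`.
  have hδ : (TStructure.t.truncGEδLT i).app K = 0 := by
    refine (Preadditive.IsIso.comp_left_eq_zero e.inv _).1 ?_
    exact singleFunctor_hom_eq_zero_of_hasProjectiveDimensionLE (n := d)
      (K := ((TStructure.t.truncLT i).obj K)⟦(1 : ℤ)⟧) (m := i - d - 1) (by omega) _
  obtain ⟨s, hs⟩ := Triangle.coyoneda_exact₃ _ (TStructure.t.triangleLTGE_distinguished i K)
    (𝟙 _) ((Category.id_comp _).trans hδ)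
  exact ⟨s, hs.symm⟩

lemma exists_isIso_homologyFunctor_map_of_isLE (K : DerivedCategory C) (i : ℤ) {d : ℕ} [K.IsLE i]
    [HasProjectiveDimensionLE ((homologyFunctor C i).obj K) d]
    (hK : ∀ j, i - d < j → j < i → IsZero ((homologyFunctor C j).obj K)) :
    ∃ f : (singleFunctor C i).obj ((homologyFunctor C i).obj K) ⟶ K,
      IsIso ((homologyFunctor C i).map f) := by
  obtain ⟨e⟩ := nonempty_truncGE_iso_singleFunctor K i
  obtain ⟨s, hs⟩ := exists_section_truncGEπ K i hK
  have := isIso_homologyFunctor_map_truncGEπ K le_rfl (i := i)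
  have hsπ : (homologyFunctor C i).map s ≫
      (homologyFunctor C i).map ((TStructure.t.truncGEπ i).app K) = 𝟙 _ := by
    rw [← Functor.map_comp, hs, CategoryTheory.Functor.map_id]
  have : IsIso ((homologyFunctor C i).map s) := IsIso.of_isIso_fac_right hsπ
  refine ⟨e.inv ≫ s, ?_⟩
  rw [Functor.map_comp]
  infer_instance

lemma exists_isIso_homologyFunctor_map (K : DerivedCategory C) (i : ℤ) {d : ℕ}
    [HasProjectiveDimensionLE ((homologyFunctor C i).obj K) d]
    (hK : ∀ j, i - d < j → j < i → IsZero ((homologyFunctor C j).obj K)) :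
    ∃ f : (singleFunctor C i).obj ((homologyFunctor C i).obj K) ⟶ K,
      IsIso ((homologyFunctor C i).map f) := by
  let T := (TStructure.t.truncLT (i + 1)).obj K
  let ι : T ⟶ K := (TStructure.t.truncLTι (i + 1)).app K
  have hι {j : ℤ} (hj : j ≤ i) : IsIso ((homologyFunctor C j).map ι) :=
    isIso_homologyFunctor_map_truncLTι K (Int.lt_add_one_of_le hj)
  let eι {j : ℤ} (hj : j ≤ i) : (homologyFunctor C j).obj T ≅ (homologyFunctor C j).obj K :=
    have := hι hj
    asIso ((homologyFunctor C j).map ι)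
  have : HasProjectiveDimensionLE ((homologyFunctor C i).obj T) d :=
    hasProjectiveDimensionLT_of_iso (eι le_rfl).symm _
  obtain ⟨f, hf⟩ := exists_isIso_homologyFunctor_map_of_isLE T i
    fun j h₁ h₂ ↦ (hK j h₁ h₂).of_iso (eι h₂.le)
  have := hι le_rfl
  refine ⟨(singleFunctor C i).map (eι le_rfl).inv ≫ f ≫ ι, ?_⟩
  simp only [Functor.map_comp]
  infer_instance

end Lifting

section Coproducts

open HomologicalComplex

variable {C : Type u} [Category.{v} C] [Abelian C] {ι : Type*} {c : ComplexShape ι}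

lemma exactAt_colimit {J : Type*} [Category* J] [HasColimitsOfShape J C]
    [HasExactColimitsOfShape J C] (F : J ⥤ HomologicalComplex C c) (n : ι)
    (hF : ∀ j, (F.obj j).ExactAt n) : (colimit F).ExactAt n := by
  let S : ShortComplex (J ⥤ C) :=
    { X₁ := F ⋙ eval C c (c.prev n)
      X₂ := F ⋙ eval C c n
      X₃ := F ⋙ eval C c (c.next n)
      f := { app j := (F.obj j).d (c.prev n) n, naturality _ _ φ := (F.map φ).comm _ _ }
      g := { app j := (F.obj j).d n (c.next n), naturality _ _ φ := (F.map φ).comm _ _ }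
      zero := NatTrans.ext (funext fun j ↦ (F.obj j).d_comp_d _ _ _) }
  have hS : S.Exact := by
    rw [ShortComplex.exact_iff_isZero_homology, Functor.isZero_iff]
    intro j
    exact (hF j).isZero_homology.of_iso (S.mapHomologyIso ((evaluation J C).obj j)).symm
  have hcolim (m : ι) : IsColimit ((eval C c m).mapCocone (colimit.cocone F)) :=
    isColimitOfPreserves _ (colimit.isColimit F)
  exact colim.exact_mapShortComplex hS (hcolim _) (hcolim _) (hcolim _)
    ((colimit F).d (c.prev n) n) ((colimit F).d n (c.next n))
    (fun _ ↦ Hom.comm _ _ _) (fun _ ↦ Hom.comm _ _ _)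

variable [HasCountableCoproducts C] [CountableAB4 C] {J : Type} [Countable J]

lemma isIso_homologyMap_sigmaι (A : J → HomologicalComplex C c) (j : J) (n : ι)
    (hA : ∀ i ≠ j, (A i).ExactAt n) : IsIso (homologyMap (Sigma.ι A j) n) := by
  classical
  let B (i : {i // i ≠ j}) : HomologicalComplex C c := A i
  let p : ∐ A ⟶ A j := Sigma.desc fun i ↦ if h : i = j then eqToHom (by rw [h]) else 0
  let q : ∐ A ⟶ ∐ B := Sigma.desc fun i ↦ if h : i = j then 0 else Sigma.ι B ⟨i, h⟩
  have hp : Sigma.ι A j ≫ p = 𝟙 _ := by simp [p]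
  have hpq : p ≫ Sigma.ι A j + q ≫ Sigma.desc (fun i ↦ Sigma.ι A i) = 𝟙 (∐ A) := by
    refine Sigma.hom_ext _ _ fun i ↦ ?_
    obtain rfl | h := eq_or_ne i j
    · simp [p, q]
    · simp [p, q, h, B]
  have hB : IsZero ((∐ B).homology n) :=
    (exactAt_colimit (Discrete.functor B) n fun i ↦ hA _ i.as.2).isZero_homology
  refine ⟨homologyMap p n, by rw [← homologyMap_comp, hp, homologyMap_id], ?_⟩
  rw [← homologyMap_comp, ← homologyMap_id, ← hpq, homologyMap_add, homologyMap_comp q,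
    hB.eq_of_tgt (homologyMap q n) 0, zero_comp, add_zero]

lemma quasiIso_sigmaDesc {c : ComplexShape J} {A : J → HomologicalComplex C c}
    {K : HomologicalComplex C c} (f : ∀ j, A j ⟶ K)
    (hA : ∀ i j, i ≠ j → (A i).ExactAt j) (hf : ∀ j, IsIso (homologyMap (f j) j)) :
    QuasiIso (Sigma.desc f) where
  quasiIsoAt j := by
    rw [quasiIsoAt_iff_isIso_homologyMap]
    have := isIso_homologyMap_sigmaι A j j fun i hi ↦ hA i j hi
    have : IsIso (homologyMap (Sigma.ι A j) j ≫ homologyMap (Sigma.desc f) j) := by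
      rw [← homologyMap_comp, Sigma.ι_desc]
      exact hf j
    exact IsIso.of_isIso_comp_left (homologyMap (Sigma.ι A j) j) _

end Coproducts

section Formality

open HomologicalComplex hiding homologyFunctor
open DerivedCategory

variable {C : Type u} [Category.{v} C] [Abelian C]

lemma homologyMap_eq_zero_of_f_eq_zero {ι : Type*} {c : ComplexShape ι}
    {K L : HomologicalComplex C c} (φ : K ⟶ L) (i : ι) (h : φ.f i = 0) : homologyMap φ i = 0 := by
  have : cyclesMap φ i = 0 := by
    rw [← cancel_mono (L.iCycles i), cyclesMap_i, h, comp_zero, zero_comp]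
  rw [← cancel_epi (K.homologyπ i), homologyπ_naturality, this, zero_comp, comp_zero]

lemma isIso_homologyMap_mkHomFromSingle {ι : Type*} [DecidableEq ι] {c : ComplexShape ι}
    {K : HomologicalComplex C c} (hK : ∀ i j, K.d i j = 0) (i : ι) :
    IsIso (homologyMap (mkHomFromSingle (𝟙 (K.X i)) fun j _ ↦ by simp [hK]) i) := by
  let a : (single C c i).obj (K.X i) ⟶ K := mkHomFromSingle (𝟙 _) (by simp [hK])
  let p : K ⟶ (single C c i).obj (K.X i) := mkHomToSingle (𝟙 _) (by simp [hK])
  have hap : a ≫ p = 𝟙 _ := from_single_hom_ext (by simp [a, p])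
  refine ⟨homologyMap p i, by rw [← homologyMap_comp, hap, homologyMap_id], ?_⟩
  rw [← homologyMap_comp, ← homologyMap_id, ← sub_eq_zero, ← homologyMap_sub]
  exact homologyMap_eq_zero_of_f_eq_zero _ _ (by simp [p])

variable [HasDerivedCategory.{w} C]

lemma isIso_homologyFunctor_map_Q_map_iff {K L : CochainComplex C ℤ} (φ : K ⟶ L) (i : ℤ) :
    IsIso ((homologyFunctor C i).map (Q.map φ)) ↔ IsIso (homologyMap φ i) :=
  NatIso.isIso_map_iff (homologyFunctorFactors C i) φ

lemma nonempty_Q_obj_iso_of_isIso_homology [HasCountableCoproducts C] [CountableAB4 C]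
    {A : ℤ → CochainComplex C ℤ} (hA : ∀ i j, i ≠ j → (A i).ExactAt j) {K L : CochainComplex C ℤ}
    (f : ∀ i, Q.obj (A i) ⟶ Q.obj K) (hf : ∀ i, IsIso ((homologyFunctor C i).map (f i)))
    (g : ∀ i, A i ⟶ L) (hg : ∀ i, IsIso (homologyMap (g i) i)) :
    Nonempty (Q.obj K ≅ Q.obj L) := by
  choose B s hs φ hφ using fun i ↦ right_fac (f i)
  have hs' (i : ℤ) : QuasiIso (s i) := (isIso_Q_map_iff_quasiIso C (s i)).1 (hs i)
  have hB (i j : ℤ) (hij : i ≠ j) : (B i).ExactAt j :=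
    (exactAt_iff_of_quasiIsoAt (s i) j).2 (hA i j hij)
  have hφ' (i : ℤ) : IsIso (homologyMap (φ i) i) := by
    have := hf i
    have hφs : Q.map (φ i) = Q.map (s i) ≫ f i := by rw [hφ, IsIso.hom_inv_id_assoc]
    rw [← isIso_homologyFunctor_map_Q_map_iff, hφs, Functor.map_comp]
    infer_instance
  have hsg (i : ℤ) : IsIso (homologyMap (s i ≫ g i) i) := by
    have := hg i
    rw [homologyMap_comp]
    infer_instance
  have : QuasiIso (Sigma.desc φ) := quasiIso_sigmaDesc φ hB hφ'
  have : QuasiIso (Sigma.desc fun i ↦ s i ≫ g i) := quasiIso_sigmaDesc _ hB hsg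
  exact ⟨(asIso (Q.map (Sigma.desc φ))).symm ≪≫ asIso (Q.map (Sigma.desc fun i ↦ s i ≫ g i))⟩

lemma exists_isIso_homologyFunctor_map_of_homology_iso [EnoughProjectives C]
    {K : CochainComplex C ℤ} {i : ℤ} {d : ℕ} {M : C} [HasProjectiveDimensionLE (K.homology i) d]
    (e : M ≅ K.homology i)
    (hK : ∀ j, i - d < j → j < i → IsZero (K.homology i) ∨ IsZero (K.homology j)) :
    ∃ f : (singleFunctor C i).obj M ⟶ Q.obj K, IsIso ((homologyFunctor C i).map f) := by
  let q (j : ℤ) : (homologyFunctor C j).obj (Q.obj K) ≅ K.homology j :=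
    (homologyFunctorFactors C j).app K
  by_cases hi : IsZero (K.homology i)
  · have hM := (hi.of_iso e).of_iso ((singleFunctorCompHomologyFunctorIso C i).app M)
    exact ⟨0, hM.isIso (hi.of_iso (q i)) _⟩
  · have : HasProjectiveDimensionLE ((homologyFunctor C i).obj (Q.obj K)) d :=
      hasProjectiveDimensionLT_of_iso (q i).symm _
    obtain ⟨f, hf⟩ := exists_isIso_homologyFunctor_map (Q.obj K) i
      fun j h₁ h₂ ↦ ((hK j h₁ h₂).resolve_left hi).of_iso (q j)
    refine ⟨(singleFunctor C i).map (e ≪≫ (q i).symm).hom ≫ f, ?_⟩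
    rw [Functor.map_comp]
    infer_instance

variable [EnoughProjectives C] [HasCountableCoproducts C] [CountableAB4 C]

theorem nonempty_Q_obj_iso_of_homology_iso {K Y : CochainComplex C ℤ} {d : ℕ}
    (hK : ∀ i, HasProjectiveDimensionLE (K.homology i) d)
    (hgap : ∀ i j : ℤ, i - d < j → j < i → IsZero (K.homology i) ∨ IsZero (K.homology j))
    (hY : ∀ i j, Y.d i j = 0) (e : ∀ i, Y.X i ≅ K.homology i) :
    Nonempty (Q.obj K ≅ Q.obj Y) := by
  have hf (i : ℤ) : ∃ f : (singleFunctor C i).obj (Y.X i) ⟶ Q.obj K,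
      IsIso ((homologyFunctor C i).map f) :=
    exists_isIso_homologyFunctor_map_of_homology_iso (e i) (hgap i)
  choose f hf using hf
  exact nonempty_Q_obj_iso_of_isIso_homology
    (fun i j hij ↦ exactAt_single_obj _ _ _ _ hij.symm) f hf _
    (isIso_homologyMap_mkHomFromSingle hY)

end Formality

section Modules

open DerivedCategory

variable {R : Type v} [Ring R]

lemma hasProjectiveDimensionLE_of_pdLE {n : ℕ} (M : Type v) [AddCommGroup M] [Module R M]
    (hM : pdLE R n M) : HasProjectiveDimensionLE (ModuleCat.of R M) n := by
  induction n generalizing M with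
  | zero =>
    have : Projective (ModuleCat.of R M) := (IsProjective.iff_projective M).1 hM
    exact (projective_iff_hasProjectiveDimensionLE_zero _).1 this
  | succ n ih =>
    obtain ⟨P, _, _, p, hP, hp, hker⟩ := hM
    have : Projective p.shortComplexKer.X₂ := (IsProjective.iff_projective P).1 hP
    exact ((LinearMap.shortExact_shortComplexKer hp).hasProjectiveDimensionLT_X₃_iff n this).2
      (ih _ hker)

lemma hasProjectiveDimensionLE_of_globalDim_le {d : ℕ} (hd : globalDim R ≤ d)
    (M : ModuleCat.{v} R) : HasProjectiveDimensionLE M d := by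
  have hM : projDim R M < (d + 1 : ℕ) :=
    ((le_iSup (fun M : ModuleCat.{v} R ↦ projDim R M) M).trans hd).trans_lt (by norm_cast; omega)
  obtain ⟨n, hn⟩ := iInf_lt_iff.1 hM
  obtain ⟨hMn, hnd⟩ := iInf_lt_iff.1 hn
  have := hasProjectiveDimensionLE_of_pdLE M hMn
  exact hasProjectiveDimensionLT_of_ge M (n + 1) (d + 1) (by exact_mod_cast hnd)

lemma nonempty_formalComplex_X_iso_homology {d : ℕ} {X : CochainComplex (ModuleCat.{v} R) ℤ}
    {i : ℤ} (hX : ¬ (d : ℤ) ∣ i → IsZero (X.homology i)) :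
    Nonempty ((formalComplex R d X).X i ≅ X.homology i) := by
  by_cases hi : (d : ℤ) ∣ i
  · exact ⟨eqToIso (if_pos hi)⟩
  · have e : (formalComplex R d X).X i ≅ ModuleCat.of R PUnit := eqToIso (if_neg hi)
    exact ⟨e ≪≫ (ModuleCat.isZero_of_subsingleton _).iso (hX hi)⟩

theorem stmt_9_general {d : ℕ} (hd : globalDim R ≤ d)
    [HasDerivedCategory.{w} (ModuleCat.{v} R)] (X : CochainComplex (ModuleCat.{v} R) ℤ)
    (hX : ∀ i : ℤ, ¬ (d : ℤ) ∣ i → IsZero (X.homology i)) :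
    Nonempty (Q.obj X ≅ Q.obj (formalComplex R d X)) := by
  refine nonempty_Q_obj_iso_of_homology_iso
    (fun i ↦ hasProjectiveDimensionLE_of_globalDim_le hd _) (fun i j hij hji ↦ ?_)
    (fun _ _ ↦ rfl) fun i ↦ (nonempty_formalComplex_X_iso_homology (hX i)).some
  by_contra! h
  have hi : (d : ℤ) ∣ i := of_not_not fun hi ↦ h.1 (hX i hi)
  have hj : (d : ℤ) ∣ j := of_not_not fun hj ↦ h.2 (hX j hj)
  have := Int.le_of_dvd (by omega) (dvd_sub hi hj)
  omega

end Modules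

theorem stmt_9 (F : Type u) [Field F] (Λ : Type v) [Ring Λ] [Algebra F Λ]
    [FiniteDimensional F Λ] (d : ℕ) (hd : 1 ≤ d) (hgldim : globalDim Λ ≤ (d : ℕ∞))
    [HasDerivedCategory.{w} (ModuleCat.{v} Λ)]
    (X : CochainComplex (ModuleCat.{v} Λ) ℤ)
    (hbdd : ∃ n₀ n₁ : ℤ, ∀ i : ℤ, (i < n₀ ∨ n₁ < i) → IsZero (X.X i))
    (hcoh : ∀ i : ℤ, ¬ ((d : ℤ) ∣ i) → IsZero (X.homology i)) :
    Nonempty (DerivedCategory.Q.obj X ≅ DerivedCategory.Q.obj (formalComplex Λ d X)) :=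
  stmt_9_general hgldim X hcoh
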